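/- Let 0 < β < α ≤ 2 and q > 0. Suppose that for every ε > 0 there is a constant C_ε such that for all λ ≥ 1, all 1 ≤ R ≤ λ, all f ∈ L²(ℝ), and every β-dimensional weight H on ℝ²: ∫_{B(0,R)} |T^λ f(x)|^q H(x) dx ≤ C_ε A_β(H) R^ε ‖f‖_{L²}^q. Then for every ε > 0 there is a constant C′_ε such that for all λ ≥ 1, all 1 ≤ R ≤ λ, all f ∈ L²(ℝ), and every α-dimensional weight H on ℝ²: ∫_{B(0,R)} |T^λ f(x)|^{αq/β} H(x) dx ≤ C′_ε A_α(H) R^ε ‖f‖_{L²}^{αq/β}. -/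

import Mathlib

/-!
The argument treats one function `F = ‖Tlam φ a lam f‖` and one ball `B` at a time. Let `H` be an
`α`-dimensional weight and put `θ = β / α`, `p = q / θ`. If `F ≤ 1`, the density `G = 1_B F ^ p H`
is a `0`-dimensional weight with constant its total mass `I`, so by Hölder `G ^ (1 - θ) * H ^ θ` is
a `β`-dimensional weight with constant `I ^ (1 - θ) * A ^ θ`. Testing the hypothesis against it
returns `I` on the left, because `F ^ q * (G ^ (1 - θ) * H ^ θ) = G` on `B`. Hence
`I ≤ K * I ^ (1 - θ) * A ^ θ`, and dividing by `I ^ (1 - θ)` gives `I ≤ K ^ (1 / θ) * A`.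
Homogeneity in `F` removes the normalization `F ≤ 1`.
-/

open MeasureTheory Metric Set

noncomputable section

abbrev ℝ2 : Type := EuclideanSpace ℝ (Fin 2)

/-- The point `(a, b)` of the plane. -/
def pt (a b : ℝ) : ℝ2 := !₂[a, b]

/-- The oscillatory integral operator `T^λ` with phase `φ^λ(x,ξ) = λ φ(x/λ, ξ)` and
amplitude `a^λ(x,ξ) = a(x/λ, ξ)`. -/
def Tlam (φ a : ℝ2 → ℝ → ℝ) (lam : ℝ) (f : ℝ → ℂ) (x : ℝ2) : ℂ :=
  ∫ ξ : ℝ, Complex.exp (Complex.I * ((lam * φ (lam⁻¹ • x) ξ : ℝ) : ℂ)) *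
    ((a (lam⁻¹ • x) ξ : ℝ) : ℂ) * f ξ

/-- `φ` is a phase of reduced form with amplitude `a`, profile `h`, error `E`,
parameters `Npar` (order of controlled derivatives), `cpar` (smallness of `E`) and
derivative bounds `Cab`. -/
structure IsReducedForm (Npar : ℕ) (cpar : ℝ) (Cab : ℕ → ℝ)
    (a φ : ℝ2 → ℝ → ℝ) (h : ℝ → ℝ) (E : ℝ2 → ℝ → ℝ) : Prop where
  a_smooth : ContDiff ℝ (⊤ : ℕ∞) fun p : ℝ2 × ℝ => a p.1 p.2
  φ_smooth : ContDiff ℝ (⊤ : ℕ∞) fun p : ℝ2 × ℝ => φ p.1 p.2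
  h_smooth : ContDiff ℝ (⊤ : ℕ∞) h
  E_smooth : ContDiff ℝ (⊤ : ℕ∞) fun p : ℝ2 × ℝ => E p.1 p.2
  a_supp : ∀ x ξ, a x ξ ≠ 0 → ‖x‖ < 1 ∧ ξ ∈ Set.Ioo (0 : ℝ) 1
  decomp : ∀ x ξ, a x ξ ≠ 0 → φ x ξ = x 0 * ξ + x 1 * h ξ + E x ξ
  h_zero : h 0 = 0
  h_deriv_zero : deriv h 0 = 0
  h_second : ∀ ξ : ℝ, 1 / 2 ≤ |iteratedDeriv 2 h ξ| ∧ |iteratedDeriv 2 h ξ| ≤ 2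
  E_zero_right : ∀ x, E x 0 = 0
  E_deriv_zero_right : ∀ x, deriv (fun ξ => E x ξ) 0 = 0
  E_zero_left : ∀ ξ, E 0 ξ = 0
  E_fderiv_zero_left : ∀ ξ, fderiv ℝ (fun x => E x ξ) 0 = 0
  φ_bound : ∀ n ≤ Npar, ∀ p : ℝ2 × ℝ, a p.1 p.2 ≠ 0 →
    ‖iteratedFDeriv ℝ n (fun q : ℝ2 × ℝ => φ q.1 q.2) p‖ ≤ Cab n
  E_bound : ∀ n ≤ Npar, ∀ p : ℝ2 × ℝ,
    ‖iteratedFDeriv ℝ n (fun q : ℝ2 × ℝ => E q.1 q.2) p‖ ≤ cpar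

/-- `H` is an `s`-dimensional weight on the plane, with constant `A`. -/
def IsWeight (s A : ℝ) (H : ℝ2 → ℝ) : Prop :=
  Measurable H ∧ (∀ x, H x ∈ Set.Icc (0 : ℝ) 1) ∧
    ∀ x₀ : ℝ2, ∀ R : ℝ, 1 ≤ R → (∫ x in Metric.ball x₀ R, H x) ≤ A * R ^ s

lemma le_rpow_inv_of_le_mul_rpow_one_sub {x D θ : ℝ} (hx : 0 ≤ x) (hD : 0 ≤ D) (hθ : 0 < θ)
    (h : x ≤ D * x ^ (1 - θ)) : x ≤ D ^ θ⁻¹ := by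
  rcases hx.eq_or_lt with rfl | hx'
  · positivity
  · rw [Real.le_rpow_inv_iff_of_pos hx hD hθ]
    have hsplit : x ^ θ * x ^ (1 - θ) = x := by
      rw [← Real.rpow_add hx', add_sub_cancel, Real.rpow_one]
    exact le_of_mul_le_mul_right (hsplit.trans_le h) (by positivity)

lemma rpow_mul_rpow_mul_rpow_one_sub {t y p θ : ℝ} (ht : 0 ≤ t) (hy : 0 ≤ y) (hθ0 : 0 ≤ θ)
    (hθ1 : θ ≤ 1) : t ^ (θ * p) * ((t ^ p * y) ^ (1 - θ) * y ^ θ) = t ^ p * y := by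
  have hty : 0 ≤ t ^ p * y := by positivity
  calc t ^ (θ * p) * ((t ^ p * y) ^ (1 - θ) * y ^ θ)
      = (t ^ p * y) ^ θ * (t ^ p * y) ^ (1 - θ) := by
        rw [mul_comm θ p, Real.rpow_mul ht, Real.mul_rpow (z := θ) (by positivity) hy]
        ring
    _ = t ^ p * y := by
        rw [← Real.rpow_add_of_nonneg hty hθ0 (sub_nonneg.2 hθ1), add_sub_cancel, Real.rpow_one]

lemma integrableOn_of_mem_Icc {X : Type*} [MeasurableSpace X] {μ : Measure X} {f : X → ℝ}
    (hf : Measurable f) {b c : ℝ} (hfbc : ∀ x, f x ∈ Icc b c) {S : Set X} (hS : μ S ≠ ⊤) :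
    IntegrableOn f S μ :=
  Measure.integrableOn_of_bounded hS hf.aestronglyMeasurable <| .of_forall fun x =>
    abs_le_max_abs_abs (hfbc x).1 (hfbc x).2

lemma integral_rpow_mul_rpow_le {X : Type*} [MeasurableSpace X] {μ : Measure X} {f g : X → ℝ}
    (hf : Integrable f μ) (hg : Integrable g μ) (hf0 : ∀ x, 0 ≤ f x) (hg0 : ∀ x, 0 ≤ g x)
    {u v : ℝ} (hu : 0 ≤ u) (hv : 0 ≤ v) (huv : u + v = 1) :
    ∫ x, f x ^ u * g x ^ v ∂μ ≤ (∫ x, f x ∂μ) ^ u * (∫ x, g x ∂μ) ^ v := by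
  have hfm := hf.aemeasurable
  have hgm := hg.aemeasurable
  have hofReal : ∀ x, ENNReal.ofReal (f x ^ u * g x ^ v) =
      ENNReal.ofReal (f x) ^ u * ENNReal.ofReal (g x) ^ v := fun x => by
    rw [ENNReal.ofReal_mul (Real.rpow_nonneg (hf0 x) u), ENNReal.ofReal_rpow_of_nonneg (hf0 x) hu,
      ENNReal.ofReal_rpow_of_nonneg (hg0 x) hv]
  rw [integral_eq_lintegral_of_nonneg_ae (.of_forall hf0) hf.1,
    integral_eq_lintegral_of_nonneg_ae (.of_forall hg0) hg.1,
    integral_eq_lintegral_of_nonneg_ae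
      (.of_forall fun x => mul_nonneg (Real.rpow_nonneg (hf0 x) u) (Real.rpow_nonneg (hg0 x) v))
      ((hfm.pow_const u).mul (hgm.pow_const v)).aestronglyMeasurable,
    ENNReal.toReal_rpow, ENNReal.toReal_rpow, ← ENNReal.toReal_mul]
  simp only [hofReal]
  refine ENNReal.toReal_mono (ENNReal.mul_ne_top ?_ ?_)
    (ENNReal.lintegral_mul_norm_pow_le hfm.ennreal_ofReal hgm.ennreal_ofReal hu hv huv)
  · exact ENNReal.rpow_ne_top_of_nonneg hu hf.lintegral_lt_top.ne
  · exact ENNReal.rpow_ne_top_of_nonneg hv hg.lintegral_lt_top.ne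

lemma exists_memLp_forall_norm_le_of_hasCompactSupport {X Y E : Type*} [TopologicalSpace X]
    [TopologicalSpace Y] [T2Space Y] [MeasurableSpace Y] [OpensMeasurableSpace Y]
    [NormedAddCommGroup E] {μ : Measure Y} [IsFiniteMeasureOnCompacts μ] {F : X × Y → E}
    (hF : Continuous F) (hFc : HasCompactSupport F) (p : ENNReal) :
    ∃ g : Y → ℝ, MemLp g p μ ∧ ∀ x y, ‖F (x, y)‖ ≤ g y := by
  obtain ⟨C, hC⟩ := hFc.exists_bound_of_continuous hF
  have hK : IsCompact (Prod.snd '' tsupport F) := hFc.isCompact.image continuous_snd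
  refine ⟨(Prod.snd '' tsupport F).indicator fun _ => C,
    memLp_indicator_const p hK.measurableSet C (.inr hK.measure_lt_top.ne), fun x y => ?_⟩
  by_cases hy : y ∈ Prod.snd '' tsupport F
  · simpa only [indicator_of_mem hy] using hC (x, y)
  · have hxy : F (x, y) = 0 := image_eq_zero_of_notMem_tsupport fun h => hy ⟨(x, y), h, rfl⟩
    rw [indicator_of_notMem hy, hxy, norm_zero]

namespace IsWeight

variable {s t A B u v : ℝ} {G H : ℝ2 → ℝ}

lemma const_nonneg (hH : IsWeight s A H) : 0 ≤ A := by
  have hunit := hH.2.2 0 1 le_rfl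
  rw [Real.one_rpow, mul_one] at hunit
  exact (integral_nonneg fun x => (hH.2.1 x).1).trans hunit

lemma integrableOn (hH : IsWeight s A H) {S : Set ℝ2} (hS : volume S ≠ ⊤) : IntegrableOn H S :=
  integrableOn_of_mem_Icc hH.1 hH.2.1 hS

lemma of_integrable (hG : Measurable G) (hG01 : ∀ x, G x ∈ Icc (0 : ℝ) 1) (hGi : Integrable G) :
    IsWeight 0 (∫ x, G x) G :=
  ⟨hG, hG01, fun x₀ R _ => by
    rw [Real.rpow_zero, mul_one]
    exact setIntegral_le_integral hGi (.of_forall fun x => (hG01 x).1)⟩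

lemma indicator_of_mem_Icc (hG : Measurable G) (hG01 : ∀ x, G x ∈ Icc (0 : ℝ) 1) {S : Set ℝ2}
    (hS : MeasurableSet S) (hSfin : volume S ≠ ⊤) :
    IsWeight 0 (∫ x in S, G x) (S.indicator G) := by
  rw [← integral_indicator hS]
  refine of_integrable (hG.indicator hS) (fun x => ⟨?_, ?_⟩)
    ((integrable_indicator_iff hS).2 (integrableOn_of_mem_Icc hG hG01 hSfin))
  · exact indicator_nonneg (fun y _ => (hG01 y).1) x
  · exact (indicator_le_self' (fun y _ => (hG01 y).1) x).trans (hG01 x).2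

lemma rpow_mul_rpow (hG : IsWeight s A G) (hH : IsWeight t B H) (hu : 0 ≤ u) (hv : 0 ≤ v)
    (huv : u + v = 1) :
    IsWeight (u * s + v * t) (A ^ u * B ^ v) (fun x => G x ^ u * H x ^ v) := by
  have hA := hG.const_nonneg
  have hB := hH.const_nonneg
  have hG0 : ∀ x, 0 ≤ G x := fun x => (hG.2.1 x).1
  have hH0 : ∀ x, 0 ≤ H x := fun x => (hH.2.1 x).1
  refine ⟨(hG.1.pow_const u).mul (hH.1.pow_const v), fun x => ⟨?_, ?_⟩, fun x₀ R hR => ?_⟩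
  · exact mul_nonneg (Real.rpow_nonneg (hG0 x) u) (Real.rpow_nonneg (hH0 x) v)
  · exact mul_le_one₀ (Real.rpow_le_one (hG0 x) (hG.2.1 x).2 hu) (Real.rpow_nonneg (hH0 x) v)
      (Real.rpow_le_one (hH0 x) (hH.2.1 x).2 hv)
  · have hR0 : 0 < R := one_pos.trans_le hR
    have hball : volume (ball x₀ R) ≠ ⊤ := measure_ball_lt_top.ne
    calc ∫ x in ball x₀ R, G x ^ u * H x ^ v
        ≤ (∫ x in ball x₀ R, G x) ^ u * (∫ x in ball x₀ R, H x) ^ v :=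
          integral_rpow_mul_rpow_le (hG.integrableOn hball) (hH.integrableOn hball) hG0 hH0
            hu hv huv
      _ ≤ (A * R ^ s) ^ u * (B * R ^ t) ^ v := by
          have hGR := hG.2.2 x₀ R hR
          have hHR := hH.2.2 x₀ R hR
          have hGI : 0 ≤ ∫ x in ball x₀ R, G x := integral_nonneg hG0
          have hHI : 0 ≤ ∫ x in ball x₀ R, H x := integral_nonneg hH0
          gcongr
      _ = A ^ u * B ^ v * R ^ (u * s + v * t) := by
          rw [Real.mul_rpow hA (by positivity), Real.mul_rpow hB (by positivity),
            ← Real.rpow_mul hR0.le, ← Real.rpow_mul hR0.le, mul_mul_mul_comm,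
            ← Real.rpow_add hR0, mul_comm s, mul_comm t]

end IsWeight

/-- The `s`-dimensional weighted `L ^ p` bound `∫_S F ^ p * H ≤ K * A_s(H)` for a single function
`F`, uniformly over all weights `H`. Quantifying over every admissible constant `A` of `H` replaces
the infimum `A_s(H)`. -/
def WeightedBound (s p K : ℝ) (S : Set ℝ2) (F : ℝ2 → ℝ) : Prop :=
  ∀ (A : ℝ) (H : ℝ2 → ℝ), IsWeight s A H → ∫ x in S, F x ^ p * H x ≤ K * A

namespace WeightedBound

variable {s p K θ : ℝ} {S : Set ℝ2} {F : ℝ2 → ℝ}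

lemma const_mul (h : WeightedBound s p K S F) (hF0 : ∀ x, 0 ≤ F x) {c : ℝ} (hc : 0 ≤ c) :
    WeightedBound s p (c ^ p * K) S (fun x => c * F x) := by
  intro A H hH
  calc ∫ x in S, (c * F x) ^ p * H x
      = c ^ p * ∫ x in S, F x ^ p * H x := by
        simp only [Real.mul_rpow hc (hF0 _), mul_assoc, integral_const_mul]
    _ ≤ c ^ p * (K * A) := by gcongr; exact h A H hH
    _ = c ^ p * K * A := by ring

lemma bootstrap_of_le_one (h : WeightedBound (θ * s) (θ * p) K S F) (hF : Measurable F)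
    (hF01 : ∀ x, F x ∈ Icc (0 : ℝ) 1) (hS : MeasurableSet S) (hSfin : volume S ≠ ⊤)
    (hθ0 : 0 < θ) (hθ1 : θ ≤ 1) (hp : 0 ≤ p) (hK : 0 ≤ K) :
    WeightedBound s p (K ^ θ⁻¹) S F := by
  intro A H hH
  have hA := hH.const_nonneg
  have hF0 : ∀ x, 0 ≤ F x := fun x => (hF01 x).1
  have hH0 : ∀ x, 0 ≤ H x := fun x => (hH.2.1 x).1
  set I := ∫ x in S, F x ^ p * H x
  set G : ℝ2 → ℝ := S.indicator fun x => F x ^ p * H x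
  have hFH01 : ∀ x, F x ^ p * H x ∈ Icc (0 : ℝ) 1 := fun x =>
    unitInterval.mul_mem ⟨Real.rpow_nonneg (hF0 x) p, Real.rpow_le_one (hF0 x) (hF01 x).2 hp⟩
      (hH.2.1 x)
  have hG : IsWeight 0 I G :=
    IsWeight.indicator_of_mem_Icc ((hF.pow_const p).mul hH.1) hFH01 hS hSfin
  have hW : IsWeight (θ * s) (I ^ (1 - θ) * A ^ θ) fun x => G x ^ (1 - θ) * H x ^ θ := by
    simpa only [mul_zero, zero_add] using
      hG.rpow_mul_rpow hH (sub_nonneg.2 hθ1) hθ0.le (sub_add_cancel 1 θ)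
  have hself : I ≤ K * A ^ θ * I ^ (1 - θ) :=
    calc I = ∫ x in S, F x ^ (θ * p) * (G x ^ (1 - θ) * H x ^ θ) :=
          setIntegral_congr_fun hS fun x hx => by
            simp only [G, indicator_of_mem hx,
              rpow_mul_rpow_mul_rpow_one_sub (hF0 x) (hH0 x) hθ0.le hθ1]
      _ ≤ K * (I ^ (1 - θ) * A ^ θ) := h _ _ hW
      _ = K * A ^ θ * I ^ (1 - θ) := by ring
  calc I ≤ (K * A ^ θ) ^ θ⁻¹ :=
        le_rpow_inv_of_le_mul_rpow_one_sub hG.const_nonneg (by positivity) hθ0 hself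
    _ = K ^ θ⁻¹ * A := by
        rw [Real.mul_rpow hK (by positivity), Real.rpow_rpow_inv hA hθ0.ne']

lemma bootstrap (h : WeightedBound (θ * s) (θ * p) K S F) (hF : Measurable F)
    (hF0 : ∀ x, 0 ≤ F x) (hFbdd : BddAbove (range F)) (hS : MeasurableSet S)
    (hSfin : volume S ≠ ⊤) (hθ0 : 0 < θ) (hθ1 : θ ≤ 1) (hp : 0 ≤ p) (hK : 0 ≤ K) :
    WeightedBound s p (K ^ θ⁻¹) S F := by
  obtain ⟨M, hM1, hFM⟩ := hFbdd.exists_ge 1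
  have hM : 0 < M := one_pos.trans_le hM1
  have hnormalized : ∀ x, M⁻¹ * F x ∈ Icc (0 : ℝ) 1 := fun x =>
    ⟨mul_nonneg (inv_nonneg.2 hM.le) (hF0 x),
      inv_mul_le_one_of_le₀ (hFM _ (mem_range_self x)) hM.le⟩
  have hscaled := ((h.const_mul hF0 (inv_nonneg.2 hM.le)).bootstrap_of_le_one
    (hF.const_mul M⁻¹) hnormalized hS hSfin hθ0 hθ1 hp (by positivity)).const_mul
    (fun x => (hnormalized x).1) hM.le
  have hconst : M ^ p * (M⁻¹ ^ (θ * p) * K) ^ θ⁻¹ = K ^ θ⁻¹ := by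
    rw [Real.mul_rpow (by positivity) hK, mul_comm θ p, Real.rpow_mul (inv_nonneg.2 hM.le),
      Real.rpow_rpow_inv (by positivity) hθ0.ne', Real.inv_rpow hM.le,
      mul_inv_cancel_left₀ (by positivity)]
  simpa only [hconst, mul_inv_cancel_left₀ hM.ne'] using hscaled

end WeightedBound

section OscillatoryIntegral

variable {φ a : ℝ2 → ℝ → ℝ} {f : ℝ → ℂ}

lemma measurable_Tlam (hφ : Measurable (Function.uncurry φ)) (ha : Measurable (Function.uncurry a))
    (lam : ℝ) (hf : AEStronglyMeasurable f) : Measurable (Tlam φ a lam f) := by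
  have hrep : Tlam φ a lam f = Tlam φ a lam (hf.mk f) := funext fun x =>
    integral_congr_ae (hf.ae_eq_mk.mono fun ξ hξ => by simp only [hξ])
  have hscale : Measurable fun p : ℝ2 × ℝ => (lam⁻¹ • p.1, p.2) := by fun_prop
  have hφ' := (Complex.measurable_ofReal.comp ((hφ.comp hscale).const_mul lam)).const_mul Complex.I
  have ha' := Complex.measurable_ofReal.comp (ha.comp hscale)
  rw [hrep]
  exact (((Complex.measurable_exp.comp hφ').mul ha').mul
    (hf.stronglyMeasurable_mk.measurable.comp measurable_snd)).stronglyMeasurable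
      |>.integral_prod_right'.measurable

lemma norm_Tlam_le {g : ℝ → ℝ} (hag : ∀ x ξ, ‖a x ξ‖ ≤ g ξ) (hgf : Integrable fun ξ => g ξ * ‖f ξ‖)
    (lam : ℝ) (x : ℝ2) : ‖Tlam φ a lam f x‖ ≤ ∫ ξ, g ξ * ‖f ξ‖ :=
  norm_integral_le_of_norm_le hgf <| .of_forall fun ξ => by
    rw [norm_mul, norm_mul, mul_comm Complex.I, Complex.norm_exp_ofReal_mul_I, one_mul,
      Complex.norm_real]
    gcongr
    exact hag _ ξ

lemma IsReducedForm.hasCompactSupport_amplitude {Npar : ℕ} {cpar : ℝ} {Cab : ℕ → ℝ} {h : ℝ → ℝ}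
    {E : ℝ2 → ℝ → ℝ} (hr : IsReducedForm Npar cpar Cab a φ h E) :
    HasCompactSupport (Function.uncurry a) := by
  refine .intro ((isCompact_closedBall (0 : ℝ2) 1).prod (isCompact_Icc (a := (0 : ℝ)) (b := 1)))
    fun ⟨x, ξ⟩ hxξ => ?_
  by_contra ha
  obtain ⟨hx, hξ⟩ := hr.a_supp x ξ ha
  exact hxξ ⟨mem_closedBall_zero_iff.2 hx.le, Ioo_subset_Icc_self hξ⟩

/-- The weighted estimate for the operators `Tlam φ a lam`: `L ^ p` on balls of radius at most
`lam`, against `s`-dimensional weights, with an arbitrarily small power loss in the radius. -/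
def WeightedEstimate (φ a : ℝ2 → ℝ → ℝ) (s p : ℝ) : Prop :=
  ∀ ε : ℝ, 0 < ε → ∃ C : ℝ, 0 < C ∧
    ∀ A : ℝ, 0 ≤ A → ∀ H : ℝ2 → ℝ, IsWeight s A H →
    ∀ lam R : ℝ, 1 ≤ lam → 1 ≤ R → R ≤ lam →
    ∀ f : ℝ → ℂ, MemLp f 2 volume →
      (∫ x in ball (0 : ℝ2) R, ‖Tlam φ a lam f x‖ ^ p * H x) ≤
        C * A * R ^ ε * ((∫ ξ : ℝ, ‖f ξ‖ ^ 2) ^ ((1 : ℝ) / 2)) ^ p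

theorem weighted_estimate_bootstrap_general (hφ : Measurable (Function.uncurry φ))
    (ha : Measurable (Function.uncurry a)) {g : ℝ → ℝ} (hg : MemLp g 2)
    (hag : ∀ x ξ, ‖a x ξ‖ ≤ g ξ) {α β q : ℝ} (hβ : 0 < β) (hβα : β ≤ α) (hq : 0 ≤ q)
    (hest : WeightedEstimate φ a β q) : WeightedEstimate φ a α (α * q / β) := by
  intro ε hε
  have hα : 0 < α := hβ.trans_le hβα
  set θ := β / α with hθ
  have hθ0 : 0 < θ := div_pos hβ hα
  have hθα : θ * α = β := div_mul_cancel₀ β hα.ne'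
  have hθq : θ * (α * q / β) = q := by rw [hθ]; field_simp
  obtain ⟨C, hC, hCest⟩ := hest (ε * θ) (mul_pos hε hθ0)
  refine ⟨C ^ θ⁻¹, Real.rpow_pos_of_pos hC _, fun A _ H hH lam R hlam hR hRlam f hf => ?_⟩
  set L := (∫ ξ : ℝ, ‖f ξ‖ ^ 2) ^ ((1 : ℝ) / 2)
  have hbound : WeightedBound (θ * α) (θ * (α * q / β)) (C * R ^ (ε * θ) * L ^ q) (ball 0 R)
      fun x => ‖Tlam φ a lam f x‖ := by
    intro A' H' hH'
    rw [hθα] at hH'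
    rw [hθq]
    exact (hCest A' hH'.const_nonneg H' hH' lam R hlam hR hRlam f hf).trans_eq (by ring)
  have hbdd : BddAbove (range fun x => ‖Tlam φ a lam f x‖) :=
    ⟨_, forall_mem_range.2 (norm_Tlam_le hag (hg.integrable_mul hf.norm) lam)⟩
  have hR0 : 0 ≤ R := zero_le_one.trans hR
  have hL0 : 0 ≤ L := by positivity
  calc _ ≤ (C * R ^ (ε * θ) * L ^ q) ^ θ⁻¹ * A :=
        hbound.bootstrap (measurable_Tlam hφ ha lam hf.1).norm (fun _ => norm_nonneg _) hbdd
          measurableSet_ball measure_ball_lt_top.ne hθ0 ((div_le_one hα).2 hβα) (by positivity)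
          (by positivity) A H hH
    _ = C ^ θ⁻¹ * A * R ^ ε * L ^ (α * q / β) := by
        have hexponent : q * θ⁻¹ = α * q / β := by rw [hθ, inv_div]; ring
        rw [Real.mul_rpow (by positivity) (by positivity),
          Real.mul_rpow hC.le (by positivity), Real.rpow_mul hR0,
          Real.rpow_rpow_inv (by positivity) hθ0.ne', ← Real.rpow_mul hL0, hexponent]
        ring

end OscillatoryIntegral

/-- the bootstrapping step in the proof of Proposition 2.3, after
Shayya: if a weighted estimate with exponent `q` holds for all `β`-dimensional weights,
then the corresponding estimate with exponent `αq/β` holds for all `α`-dimensional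
weights, for `0 < β < α ≤ 2`. -/
theorem weighted_estimate_bootstrap :
    ∃ N₀ : ℕ, ∃ c₀ : ℝ, 0 < c₀ ∧
      ∀ Npar : ℕ, N₀ ≤ Npar → ∀ cpar : ℝ, 0 < cpar → cpar ≤ c₀ →
      ∀ (Cab : ℕ → ℝ) (a φ : ℝ2 → ℝ → ℝ) (h : ℝ → ℝ) (E : ℝ2 → ℝ → ℝ),
        IsReducedForm Npar cpar Cab a φ h E →
      ∀ α β : ℝ, 0 < β → β < α → α ≤ 2 →
      ∀ q : ℝ, 0 < q →
      -- the hypothesis: the weighted estimate with exponent q for β-dimensional weights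
      (∀ ε : ℝ, 0 < ε → ∃ Cε : ℝ, 0 < Cε ∧
        ∀ A : ℝ, 0 ≤ A → ∀ H : ℝ2 → ℝ, IsWeight β A H →
        ∀ lam R : ℝ, 1 ≤ lam → 1 ≤ R → R ≤ lam →
        ∀ f : ℝ → ℂ, MemLp f 2 volume →
          (∫ x in Metric.ball (0 : ℝ2) R, ‖Tlam φ a lam f x‖ ^ q * H x) ≤
            Cε * A * R ^ ε * ((∫ ξ : ℝ, ‖f ξ‖ ^ 2) ^ ((1 : ℝ) / 2)) ^ q) →
      -- the conclusion: the estimate with exponent αq/β for α-dimensional weights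
      ∀ ε : ℝ, 0 < ε → ∃ Cε' : ℝ, 0 < Cε' ∧
        ∀ A : ℝ, 0 ≤ A → ∀ H : ℝ2 → ℝ, IsWeight α A H →
        ∀ lam R : ℝ, 1 ≤ lam → 1 ≤ R → R ≤ lam →
        ∀ f : ℝ → ℂ, MemLp f 2 volume →
          (∫ x in Metric.ball (0 : ℝ2) R, ‖Tlam φ a lam f x‖ ^ (α * q / β) * H x) ≤
            Cε' * A * R ^ ε * ((∫ ξ : ℝ, ‖f ξ‖ ^ 2) ^ ((1 : ℝ) / 2)) ^ (α * q / β) := by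
  refine ⟨0, 1, one_pos, fun _ _ _ _ _ _ a φ _ _ hr α β hβ hβα _ q hq => ?_⟩
  obtain ⟨g, hg, hag⟩ := exists_memLp_forall_norm_le_of_hasCompactSupport
    hr.a_smooth.continuous hr.hasCompactSupport_amplitude (μ := volume) 2
  exact weighted_estimate_bootstrap_general hr.φ_smooth.continuous.measurable
    hr.a_smooth.continuous.measurable hg hag hβ hβα.le hq.le
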